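/- arXiv:2106.05333 — 2 statements merged into one kernel-verified Lean document; each statement's English description precedes it below -/
import Mathlib

section
/- For every integer α ≥ 1, the graph G(α, 2, 0) is not dimension-critical. -/
/-- `G` has a unit-distance representation in `ℝ^n`: an injective map of the vertices to
points of Euclidean `n`-space with adjacent vertices at Euclidean distance exactly `1`. -/
def SimpleGraph.HasUnitDistRep {V : Type*} (G : SimpleGraph V) (n : ℕ) : Prop :=
  ∃ f : V → EuclideanSpace ℝ (Fin n),
    Function.Injective f ∧ ∀ ⦃u v⦄, G.Adj u v → Dist.dist (f u) (f v) = 1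

/-- The dimension of `G`: the least `n` such that `G` has a unit-distance representation
in `ℝ^n`. -/
noncomputable def SimpleGraph.udim {V : Type*} (G : SimpleGraph V) : ℕ :=
  sInf {n | G.HasUnitDistRep n}

/-- `G` is dimension-critical: deleting any edge strictly lowers the dimension. -/
def SimpleGraph.IsDimCritical {V : Type*} (G : SimpleGraph V) : Prop :=
  ∀ e ∈ G.edgeSet, (G.deleteEdges {e}).udim < G.udim


/-- Part sizes for the complete multipartite graph `G(α, β, γ)`:
`α` parts of size 1, `β` parts of size 2, `γ` parts of size 3. -/
def Gsize (α β γ : ℕ) : Fin α ⊕ Fin β ⊕ Fin γ → ℕ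
  | Sum.inl _ => 1
  | Sum.inr (Sum.inl _) => 2
  | Sum.inr (Sum.inr _) => 3

/-- The complete multipartite graph `G(α, β, γ)` with `α` parts of size 1, `β` parts of
size 2, and `γ` parts of size 3; vertices are adjacent iff they lie in different parts. -/
def Gmp (α β γ : ℕ) :
    SimpleGraph (Σ i : Fin α ⊕ Fin β ⊕ Fin γ, Fin (Gsize α β γ i)) :=
  SimpleGraph.completeMultipartiteGraph fun i => Fin (Gsize α β γ i)

/-!
If all `N` parts have at most two elements, placing the two elements of part `i` at `±√(1/2) eᵢ`
shows that the dimension is at most `N`. Let `u` lie in part `a`, let `y` lie in part `b`, and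
choose a transversal `p` of the parts avoiding `u` and `y`. Delete the edge from `u` to the
representative `p c` of a third part. The points `p i` still have pairwise distance `1`, so they
are affinely independent, and a representation in dimension less than `N` would express `u` by
barycentric coordinates `w` with respect to them. The facet opposite `p b` lies in the
perpendicular bisector of `p b` and `y`, and so does `u`, hence `w b = 0`. Since
`dist u (p j) ^ 2 = (∑ i, w i ^ 2 + 1 - 2 * w j) / 2`, the case `j = b` gives `∑ i, w i ^ 2 = 1`,
and then `dist u (p j) ^ 2 = 1 - w j`. As `u` is adjacent to all `p j` with `j ≠ a, c`, the weight
`w` vanishes except at `a` and `c`, and `∑ i, w i = ∑ i, w i ^ 2 = 1` forces `u = p a` or `u = p c`.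
-/

section Affine

variable {k V P ι : Type*} [Field k] [AddCommGroup V] [Module k V] [AddTorsor V P]

lemma weight_eq_zero_of_affineCombination_mem {S : AffineSubspace k P} {s : Finset ι}
    {p : ι → P} {w : ι → k} (hw : ∑ i ∈ s, w i = 1) {b : ι} (hb : b ∈ s) (hpb : p b ∉ S)
    (hp : ∀ i ∈ s, i ≠ b → p i ∈ S) (hu : s.affineCombination k p w ∈ S) : w b = 0 := by
  classical
  by_contra hwb
  set u := s.affineCombination k p w with hu_def
  have hsum : w b • (p b -ᵥ u) + ∑ i ∈ s.erase b, w i • (p i -ᵥ u) = 0 := by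
    rw [Finset.add_sum_erase _ (fun i => w i • (p i -ᵥ u)) hb,
      s.sum_smul_vsub_const_eq_affineCombination_vsub w p u hw, ← hu_def, vsub_self]
  have hrest : ∑ i ∈ s.erase b, w i • (p i -ᵥ u) ∈ S.direction :=
    Submodule.sum_mem _ fun i hi => Submodule.smul_mem _ _ <|
      AffineSubspace.vsub_mem_direction
        (hp i (Finset.mem_of_mem_erase hi) (Finset.ne_of_mem_erase hi)) hu
  have hdir : w b • (p b -ᵥ u) ∈ S.direction := by
    rw [eq_neg_of_add_eq_zero_left hsum]
    exact neg_mem hrest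
  rw [Submodule.smul_mem_iff _ hwb, AffineSubspace.vsub_right_mem_direction_iff_mem hu] at hdir
  exact hpb hdir

end Affine

section Equidistant

variable {V P ι : Type*} [NormedAddCommGroup V] [InnerProductSpace ℝ V] [MetricSpace P]
  [NormedAddTorsor V P] {p : ι → P} {r : ℝ}

lemma norm_sq_weightedVSub_of_pairwise_dist_eq (hp : Pairwise fun i j => dist (p i) (p j) = r)
    {s : Finset ι} {w : ι → ℝ} (hw : ∑ i ∈ s, w i = 0) :
    ‖s.weightedVSub p w‖ ^ 2 = r ^ 2 / 2 * ∑ i ∈ s, w i ^ 2 := by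
  classical
  have hdist (i j : ι) : w i * w j * (dist (p i) (p j) * dist (p i) (p j)) =
      r ^ 2 * (w i * w j) - if i = j then r ^ 2 * w i ^ 2 else 0 := by
    split_ifs with h
    · subst h
      rw [dist_self]
      ring
    · rw [hp h]
      ring
  rw [← real_inner_self_eq_norm_sq, EuclideanGeometry.inner_weightedVSub p hw p hw]
  simp only [hdist, Finset.sum_sub_distrib, ← Finset.mul_sum, hw, mul_zero, Finset.sum_const_zero,
    Finset.sum_ite_eq, Finset.sum_ite_mem, Finset.inter_self]
  ring

lemma affineIndependent_of_pairwise_dist_eq (hr : r ≠ 0)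
    (hp : Pairwise fun i j => dist (p i) (p j) = r) : AffineIndependent ℝ p := by
  rw [affineIndependent_def]
  intro s w hw h0 i hi
  have hsq : ∑ j ∈ s, w j ^ 2 = 0 := by
    have h := norm_sq_weightedVSub_of_pairwise_dist_eq hp hw
    simpa [h0, hr] using h
  have hnonneg : ∀ j ∈ s, 0 ≤ w j ^ 2 := fun j _ => sq_nonneg (w j)
  exact pow_eq_zero_iff two_ne_zero |>.1 ((Finset.sum_eq_zero_iff_of_nonneg hnonneg).1 hsq i hi)

lemma dist_sq_affineCombination_of_pairwise_dist_eq
    (hp : Pairwise fun i j => dist (p i) (p j) = r) {s : Finset ι} {w : ι → ℝ}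
    (hw : ∑ i ∈ s, w i = 1) {j : ι} (hj : j ∈ s) :
    dist (s.affineCombination ℝ p w) (p j) ^ 2 =
      r ^ 2 / 2 * (∑ i ∈ s, w i ^ 2 + 1 - 2 * w j) := by
  classical
  have hsum : ∑ i ∈ s, (w - Pi.single j 1 : ι → ℝ) i = 0 := by
    simp [hw, hj]
  have hsq : ∑ i ∈ s, (w - Pi.single j 1 : ι → ℝ) i ^ 2 = ∑ i ∈ s, w i ^ 2 + 1 - 2 * w j := by
    simp only [Pi.sub_apply, sub_sq, Pi.single_apply, Finset.sum_add_distrib,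
      Finset.sum_sub_distrib, mul_ite, mul_one, mul_zero, ite_pow, one_pow, zero_pow two_ne_zero,
      Finset.sum_ite_eq', hj, if_true]
    ring
  rw [← hsq, ← norm_sq_weightedVSub_of_pairwise_dist_eq hp hsum, ← Finset.affineCombination_vsub,
    Finset.affineCombination_piSingle ℝ s p hj, ← dist_eq_norm_vsub]

lemma dist_sq_affineCombination_of_dist_eq_of_weight_eq_zero [Fintype ι] (hr : r ≠ 0)
    (hp : Pairwise fun i j => dist (p i) (p j) = r) {w : ι → ℝ} (hw : ∑ i, w i = 1) {b : ι}
    (hwb : w b = 0) (hub : dist (Finset.univ.affineCombination ℝ p w) (p b) = r) :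
    ∑ i, w i ^ 2 = 1 ∧
      ∀ j, dist (Finset.univ.affineCombination ℝ p w) (p j) ^ 2 = r ^ 2 * (1 - w j) := by
  have hdist j := dist_sq_affineCombination_of_pairwise_dist_eq hp hw (Finset.mem_univ j)
  have hsq : ∑ i, w i ^ 2 = 1 := by
    have h := hdist b
    rw [hub, hwb] at h
    apply mul_left_cancel₀ (pow_ne_zero 2 hr)
    linarith
  refine ⟨hsq, fun j => ?_⟩
  rw [hdist, hsq]
  ring

lemma eq_one_or_eq_one_of_sum_eq_one_of_sum_sq_eq_one [Fintype ι] {w : ι → ℝ}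
    (hw : ∑ i, w i = 1) (hsq : ∑ i, w i ^ 2 = 1) {a c : ι} (hac : a ≠ c)
    (h0 : ∀ i, i ≠ a → i ≠ c → w i = 0) :
    w a = 1 ∨ w c = 1 := by
  rw [Fintype.sum_eq_add a c hac fun i hi => h0 i hi.1 hi.2] at hw
  rw [Fintype.sum_eq_add a c hac fun i hi => by rw [h0 i hi.1 hi.2, zero_pow two_ne_zero]] at hsq
  have hmul : w a * w c = 0 := by
    linear_combination (w a + w c + 1) / 2 * hw - hsq / 2
  rcases mul_eq_zero.1 hmul with h | h
  · exact .inr (by linarith)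
  · exact .inl (by linarith)

lemma eq_or_eq_of_pairwise_dist_eq_of_mem_affineSpan [Finite ι] (hr : r ≠ 0)
    (hp : Pairwise fun i j => dist (p i) (p j) = r) {u y : P}
    (hu_span : u ∈ affineSpan ℝ (Set.range p)) {a b c : ι} (hab : a ≠ b) (hcb : c ≠ b)
    (hac : a ≠ c) (hyb : p b ≠ y) (hy : ∀ i, i ≠ b → dist (p i) y = r) (huy : dist u y = r)
    (hu : ∀ i, i ≠ a → i ≠ c → dist u (p i) = r) : u = p a ∨ u = p c := by
  cases nonempty_fintype ι
  obtain ⟨w, hw, rfl⟩ := eq_affineCombination_of_mem_affineSpan_of_fintype hu_span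
  have hub := hu b hab.symm hcb.symm
  have hwb : w b = 0 := by
    refine weight_eq_zero_of_affineCombination_mem (S := AffineSubspace.perpBisector (p b) y) hw
      (Finset.mem_univ b) (by rwa [AffineSubspace.left_mem_perpBisector]) (fun i _ hib => ?_) ?_
    · rw [AffineSubspace.mem_perpBisector_iff_dist_eq, hp hib, hy i hib]
    · rw [AffineSubspace.mem_perpBisector_iff_dist_eq, hub, huy]
  obtain ⟨hsq, hdist⟩ :=
    dist_sq_affineCombination_of_dist_eq_of_weight_eq_zero hr hp hw hwb hub
  have hw0 : ∀ i, i ≠ a → i ≠ c → w i = 0 := by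
    intro i hia hic
    have h := hdist i
    rw [hu i hia hic] at h
    have : 1 = 1 - w i := mul_left_cancel₀ (pow_ne_zero 2 hr) (by rw [← h, mul_one])
    linarith
  have heq {j : ι} (hj : w j = 1) : Finset.univ.affineCombination ℝ p w = p j := by
    rw [← dist_eq_zero, ← pow_eq_zero_iff two_ne_zero, hdist, hj, sub_self, mul_zero]
  exact (eq_one_or_eq_one_of_sum_eq_one_of_sum_sq_eq_one hw hsq hac hw0).imp heq heq

lemma card_le_finrank_of_pairwise_dist_eq [Fintype ι] [FiniteDimensional ℝ V] (hr : r ≠ 0)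
    (hp : Pairwise fun i j => dist (p i) (p j) = r) {u y : P} {a b c : ι} (hab : a ≠ b)
    (hcb : c ≠ b) (hac : a ≠ c) (hyb : p b ≠ y) (hy : ∀ i, i ≠ b → dist (p i) y = r)
    (huy : dist u y = r) (hu : ∀ i, i ≠ a → i ≠ c → dist u (p i) = r) (hua : u ≠ p a)
    (huc : u ≠ p c) : Fintype.card ι ≤ Module.finrank ℝ V := by
  have hind := affineIndependent_of_pairwise_dist_eq hr hp
  have hcard : Fintype.card ι ≤ Module.finrank ℝ V + 1 :=
    hind.card_le_finrank_succ.trans (Nat.add_le_add_right (Submodule.finrank_le _) 1)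
  by_contra! hlt
  have hspan : affineSpan ℝ (Set.range p) = ⊤ :=
    hind.affineSpan_eq_top_iff_card_eq_finrank_add_one.2 (le_antisymm hcard hlt)
  exact (eq_or_eq_of_pairwise_dist_eq_of_mem_affineSpan hr hp (hspan ▸ AffineSubspace.mem_top ℝ V u)
    hab hcb hac hyb hy huy hu).elim hua huc

end Equidistant

section Graph

variable {W ι : Type*} {G H : SimpleGraph W} {n : ℕ}

lemma hasUnitDistRep_of_le (hHG : H ≤ G) (hG : G.HasUnitDistRep n) : H.HasUnitDistRep n := by
  obtain ⟨f, hf, hdist⟩ := hG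
  exact ⟨f, hf, fun _ _ h => hdist (hHG h)⟩

lemma not_isDimCritical_of_forall_le {e : Sym2 W} (he : e ∈ G.edgeSet) (hG : G.HasUnitDistRep n)
    (hn : ∀ m, (G.deleteEdges {e}).HasUnitDistRep m → n ≤ m) : ¬ G.IsDimCritical := by
  intro hcrit
  have hrep : (G.deleteEdges {e}).HasUnitDistRep (G.deleteEdges {e}).udim :=
    Nat.sInf_mem (s := {m | (G.deleteEdges {e}).HasUnitDistRep m})
      ⟨n, hasUnitDistRep_of_le (G.deleteEdges_le {e}) hG⟩
  have hle : G.udim ≤ n := Nat.sInf_le hG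
  exact (hcrit e he).not_ge (hle.trans (hn _ hrep))

lemma card_le_of_hasUnitDistRep_of_pairwise_adj [Fintype ι] (hG : G.HasUnitDistRep n) {q : ι → W}
    (hq : Pairwise fun i j => G.Adj (q i) (q j)) {u y : W} {a b c : ι} (hab : a ≠ b)
    (hcb : c ≠ b) (hac : a ≠ c) (hyb : q b ≠ y) (hy : ∀ i, i ≠ b → G.Adj (q i) y)
    (huy : G.Adj u y) (hu : ∀ i, i ≠ a → i ≠ c → G.Adj u (q i)) (hua : u ≠ q a)
    (huc : u ≠ q c) : Fintype.card ι ≤ n := by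
  obtain ⟨f, hf, hdist⟩ := hG
  simpa using card_le_finrank_of_pairwise_dist_eq one_ne_zero
    (p := f ∘ q) (fun i j hij => hdist (hq hij)) hab hcb hac (hf.ne hyb)
    (fun i hi => hdist (hy i hi)) (hdist huy) (fun i hia hic => hdist (hu i hia hic))
    (hf.ne hua) (hf.ne huc)

end Graph

section CompleteMultipartite

open SimpleGraph

lemma dist_single_eq_one_of_sq_eq_half {κ : Type*} [Fintype κ] [DecidableEq κ] {i j : κ}
    (hij : i ≠ j) {x y : ℝ} (hx : x ^ 2 = 1 / 2) (hy : y ^ 2 = 1 / 2) :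
    dist (EuclideanSpace.single i x) (EuclideanSpace.single j y) = 1 := by
  have horth : inner ℝ (EuclideanSpace.single i x) (EuclideanSpace.single j y) = 0 := by
    simp [EuclideanSpace.inner_single_left, hij]
  have hsq := norm_sub_sq_real (EuclideanSpace.single i x) (EuclideanSpace.single j y)
  rw [horth, PiLp.norm_single, PiLp.norm_single, Real.norm_eq_abs,
    Real.norm_eq_abs, sq_abs, sq_abs, hx, hy] at hsq
  rw [dist_eq_norm, ← pow_eq_one_iff_of_nonneg (norm_nonneg _) two_ne_zero, hsq]
  norm_num

lemma exists_injective_forall_sq_eq {α : Type*} [Fintype α] (hα : Fintype.card α ≤ 2) {t : ℝ}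
    (ht : 0 < t) : ∃ s : α → ℝ, Function.Injective s ∧ ∀ x, s x ^ 2 = t := by
  obtain ⟨g⟩ : Nonempty (α ↪ Bool) := Function.Embedding.nonempty_of_card_le hα
  have hpos : 0 < √t := Real.sqrt_pos.2 ht
  have hsign : Function.Injective fun β : Bool => bif β then √t else -√t :=
    Bool.injective_iff.2 (neg_lt_self hpos).ne
  refine ⟨_, hsign.comp g.injective, fun x => ?_⟩
  cases h : g x <;> simp [h, Real.sq_sqrt ht.le]

variable {ι : Type*} [Fintype ι] {V : ι → Type*}

lemma completeMultipartiteGraph_hasUnitDistRep [∀ i, Fintype (V i)]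
    (hV : ∀ i, Fintype.card (V i) ≤ 2) :
    (completeMultipartiteGraph V).HasUnitDistRep (Fintype.card ι) := by
  choose s hs hsq using fun i => exists_injective_forall_sq_eq (hV i) (one_half_pos (α := ℝ))
  let e := Fintype.equivFin ι
  refine ⟨fun x => EuclideanSpace.single (e x.1) (s x.1 x.2), ?_, ?_⟩
  · rintro ⟨i, x⟩ ⟨j, y⟩ h
    have hx := congr_arg (· (e i)) h
    rcases eq_or_ne i j with rfl | hij
    · simp only [PiLp.single_apply, if_true] at hx
      rw [hs i hx]
    · have hx0 : s i x = 0 := by simpa [PiLp.single_apply, hij] using hx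
      simpa [hx0] using hsq i x
  · rintro ⟨i, x⟩ ⟨j, y⟩ hij
    exact dist_single_eq_one_of_sq_eq_half (e.injective.ne hij) (hsq i x) (hsq j y)

lemma card_le_of_hasUnitDistRep_deleteEdges_completeMultipartiteGraph {a b c : ι} (hab : a ≠ b)
    (hcb : c ≠ b) (hac : a ≠ c) (q : ∀ i, V i) {x : V a} (hx : x ≠ q a) {y : V b} (hy : y ≠ q b)
    {n : ℕ} (hn : ((completeMultipartiteGraph V).deleteEdges
      {s(⟨a, x⟩, ⟨c, q c⟩)}).HasUnitDistRep n) :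
    Fintype.card ι ≤ n := by
  have hq (i : ι) : (⟨i, q i⟩ : Σ i, V i) ≠ ⟨a, x⟩ := by
    intro h
    cases h
    exact hx rfl
  have hu (i : ι) (hia : i ≠ a) (hic : i ≠ c) (z : V i) :
      ((completeMultipartiteGraph V).deleteEdges {s(⟨a, x⟩, ⟨c, q c⟩)}).Adj ⟨a, x⟩ ⟨i, z⟩ := by
    simp [deleteEdges_adj, hia.symm, hia, hic]
  have hq_adj (i j : ι) (hij : i ≠ j) (z : V j) (hz : (⟨j, z⟩ : Σ i, V i) ≠ ⟨a, x⟩) :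
      ((completeMultipartiteGraph V).deleteEdges {s(⟨a, x⟩, ⟨c, q c⟩)}).Adj ⟨i, q i⟩ ⟨j, z⟩ := by
    refine deleteEdges_adj.2 ⟨hij, fun h => ?_⟩
    rcases Sym2.eq_iff.1 h with h | h
    · exact hq i h.1
    · exact hz h.2
  refine card_le_of_hasUnitDistRep_of_pairwise_adj hn (q := fun i => ⟨i, q i⟩)
    (fun i j hij => hq_adj i j hij _ (hq j)) (y := ⟨b, y⟩) hab hcb hac ?_
    (fun i hib => hq_adj i b hib y ?_) (hu b hab.symm hcb.symm y)
    (fun i hia hic => hu i hia hic (q i)) (hq a).symm (hq c).symm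
  · simpa using hy.symm
  · exact fun h => hab (congr_arg Sigma.fst h).symm

lemma completeMultipartiteGraph_not_isDimCritical [∀ i, Fintype (V i)] [∀ i, Nonempty (V i)]
    (hV : ∀ i, Fintype.card (V i) ≤ 2) {a b : ι} (hab : a ≠ b) [Nontrivial (V a)]
    [Nontrivial (V b)] (hι : 2 < Fintype.card ι) :
    ¬ (completeMultipartiteGraph V).IsDimCritical := by
  classical
  obtain ⟨c, -, hc⟩ : ∃ c ∈ Finset.univ, c ∉ ({a, b} : Finset ι) :=
    Finset.exists_mem_notMem_of_card_lt_card (Finset.card_le_two.trans_lt hι)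
  obtain ⟨hca, hcb⟩ : c ≠ a ∧ c ≠ b := by simpa using hc
  let q (i : ι) : V i := Classical.arbitrary (V i)
  obtain ⟨x, hx⟩ := exists_ne (q a)
  obtain ⟨y, hy⟩ := exists_ne (q b)
  exact not_isDimCritical_of_forall_le (e := s(⟨a, x⟩, ⟨c, q c⟩)) hca.symm
    (completeMultipartiteGraph_hasUnitDistRep hV) fun _ hn =>
    card_le_of_hasUnitDistRep_deleteEdges_completeMultipartiteGraph hab hcb hca.symm q hx hy hn

end CompleteMultipartite

theorem Gmp_alpha_two_zero_not_dimCritical_general {α β : ℕ} (hβ : 2 ≤ β) (hαβ : 2 < α + β) :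
    ¬ (Gmp α β 0).IsDimCritical := by
  have hne : ∀ i, Nonempty (Fin (Gsize α β 0 i)) := by
    rintro (_ | _ | i)
    · exact ⟨(0 : Fin 1)⟩
    · exact ⟨(0 : Fin 2)⟩
    · exact i.elim0
  have hcard : ∀ i, Fintype.card (Fin (Gsize α β 0 i)) ≤ 2 := by
    rintro (_ | _ | i)
    · exact Nat.le_succ 1
    · exact le_rfl
    · exact i.elim0
  have hpair : ∀ i, Nontrivial (Fin (Gsize α β 0 (.inr (.inl i)))) :=
    fun _ => inferInstanceAs (Nontrivial (Fin 2))
  have hab : (.inr (.inl ⟨0, by omega⟩) : Fin α ⊕ Fin β ⊕ Fin 0) ≠ .inr (.inl ⟨1, hβ⟩) := by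
    simp
  exact completeMultipartiteGraph_not_isDimCritical hcard hab (by simpa using hαβ)

theorem Gmp_alpha_two_zero_not_dimCritical (α : ℕ) (hα : 1 ≤ α) :
    ¬ (Gmp α 2 0).IsDimCritical :=
  Gmp_alpha_two_zero_not_dimCritical_general le_rfl (by omega)
end

section
/- Let n ≥ 2 be an integer and let S be a circle in the Euclidean plane ℝ² of radius r = √((n + 1)/(2n)). Then no cycle of edge-length 1 is embeddable on S: for every integer m ≥ 3, there do not exist m distinct points p_1, …, p_m on S such that |p_i − p_{i+1}| = 1 for all i (indices taken modulo m). -/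
/-!
Let `x i` be the position vectors, from the centre, of the vertices of a closed polygon with edges
of length `d` inscribed in a circle of radius `r`. Unless the polygon turns back on itself,
`x (i - 1)` and `x (i + 1)` are mirror images in the line through `x i`, so that
`x (i - 1) + x (i + 1) = (2 - (d / r) ^ 2) • x i`. Hence multiplication by `2 - (d / r) ^ 2` maps
the finitely generated `ℤ`-module spanned by the `x i` into itself, which makes `(d / r) ^ 2` an
algebraic integer. For `d = 1` and `r ^ 2 = (n + 1) / (2 * n)` it is the number `2 - 2 / (n + 1)`,
which is rational but not an integer.
-/

open Module

theorem isIntegral_of_smul_mem_span_range {R A M ι : Type*} [CommRing R] [CommRing A] [IsDomain A]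
    [Algebra R A] [AddCommGroup M] [Module R M] [Module A M] [IsScalarTower R A M]
    [IsTorsionFree A M] [Finite ι] {v : ι → M} {a : A} (hv : v ≠ 0)
    (ha : ∀ i, a • v i ∈ Submodule.span R (Set.range v)) : IsIntegral R a := by
  refine isIntegral_of_smul_mem_submodule (Submodule.span R (Set.range v)) ?_
    (Submodule.fg_span (Set.finite_range v)) a fun w hw ↦ ?_
  · contrapose! hv
    exact funext fun i ↦ Submodule.span_eq_bot.1 hv _ (Set.mem_range_self i)
  · induction hw using Submodule.span_induction with
    | mem _ h => obtain ⟨i, rfl⟩ := h; exact ha i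
    | zero => simp
    | add _ _ _ _ hx hy => simpa only [smul_add] using add_mem hx hy
    | smul s _ _ hx => simpa only [smul_comm a s] using Submodule.smul_mem _ s hx

theorem sub_one_ne_add_one_of_three_le {m : ℕ} (hm : 3 ≤ m) (i : ZMod m) : i - 1 ≠ i + 1 := by
  intro h
  have two_eq_zero : ((2 : ℕ) : ZMod m) = 0 := by
    push_cast
    linear_combination -h
  have : m ≤ 2 := Nat.le_of_dvd two_pos ((ZMod.natCast_eq_zero_iff 2 m).1 two_eq_zero)
  omega

section Plane

variable {V : Type*} [NormedAddCommGroup V] [InnerProductSpace ℝ V]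

theorem add_eq_smul_of_norm_eq_of_dist_eq (hV : finrank ℝ V = 2) {x y z : V} {r d : ℝ}
    (hx : ‖x‖ = r) (hy : ‖y‖ = r) (hz : ‖z‖ = r) (hxy : dist x y = d) (hyz : dist y z = d)
    (hxz : x ≠ z) : x + z = (2 - (d / r) ^ 2) • y := by
  have := Fact.mk hV
  have hr : r ≠ 0 := by
    rintro rfl
    exact hxz ((norm_eq_zero.1 hx).trans (norm_eq_zero.1 hz).symm)
  have inner_x_y : 2 * inner ℝ x y = 2 * r ^ 2 - d ^ 2 := by
    rw [← hxy, dist_eq_norm, norm_sub_sq_real, hx, hy]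
    ring
  have inner_z_y : 2 * inner ℝ z y = 2 * r ^ 2 - d ^ 2 := by
    rw [← hyz, dist_comm, dist_eq_norm, norm_sub_sq_real, hz, hy]
    ring
  have y_orthogonal : inner ℝ (x - z) y = 0 := by
    rw [inner_sub_left]
    linarith
  have add_orthogonal : inner ℝ (x - z) (x + z) = 0 := by
    rw [real_inner_comm, real_inner_add_sub_eq_zero_iff, hx, hz]
  obtain ⟨a, ha⟩ := Submodule.mem_span_singleton.1 <|
    Submodule.mem_span_singleton_of_inner_eq_zero_of_inner_eq_zero (sub_ne_zero.2 hxz)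
      (norm_ne_zero_iff.1 (hy ▸ hr)) add_orthogonal y_orthogonal
  have a_mul_sq : a * r ^ 2 = 2 * r ^ 2 - d ^ 2 := by
    rw [← hy, ← real_inner_self_eq_norm_sq, ← real_inner_smul_left, ha, inner_add_left,
      real_inner_self_eq_norm_sq, hy]
    linarith
  have a_eq : a = 2 - (d / r) ^ 2 := by
    field_simp
    exact a_mul_sq
  rw [← ha, a_eq]

variable {P : Type*} [MetricSpace P] [NormedAddTorsor V P] {m : ℕ} [NeZero m] {r : ℝ} {c : P}

theorem isIntegral_div_sq_of_cycle_on_circle (hV : finrank ℝ V = 2) {d : ℝ}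
    {p : ZMod m → P} (hp : ∀ i, p (i - 1) ≠ p (i + 1)) (hr : ∀ i, dist (p i) c = r)
    (hd : ∀ i, dist (p i) (p (i + 1)) = d) : IsIntegral ℤ ((d / r) ^ 2) := by
  let x : ZMod m → V := fun i ↦ p i -ᵥ c
  have norm_x (i) : ‖x i‖ = r := by rw [← dist_eq_norm_vsub, hr]
  have dist_x (i) : dist (x i) (x (i + 1)) = d := by rw [dist_vsub_cancel_right, hd]
  have recurrence (i) : x (i - 1) + x (i + 1) = (2 - (d / r) ^ 2) • x i :=
    add_eq_smul_of_norm_eq_of_dist_eq hV (norm_x _) (norm_x _) (norm_x _)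
      (by simpa only [sub_add_cancel] using dist_x (i - 1)) (dist_x i)
      ((vsub_left_injective c).ne (hp i))
  have x_ne_zero : x ≠ 0 := fun h ↦ hp 0 <| vsub_left_injective c <|
    (congrFun h (0 - 1)).trans (congrFun h (0 + 1)).symm
  have isIntegral_two_sub : IsIntegral ℤ (2 - (d / r) ^ 2) := by
    refine isIntegral_of_smul_mem_span_range x_ne_zero fun i ↦ ?_
    rw [← recurrence]
    exact add_mem (Submodule.mem_span_of_mem ⟨_, rfl⟩) (Submodule.mem_span_of_mem ⟨_, rfl⟩)
  simpa only [Nat.cast_ofNat, sub_sub_cancel] using (isIntegral_natCast 2).sub isIntegral_two_sub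

theorem no_unit_cycle_on_circle_general (hV : finrank ℝ V = 2)
    (hr : ¬ IsIntegral ℤ (r ^ 2)⁻¹) :
    ¬ ∃ p : ZMod m → P, (∀ i, p (i - 1) ≠ p (i + 1)) ∧ (∀ i, dist (p i) c = r) ∧
      ∀ i, dist (p i) (p (i + 1)) = 1 := by
  rintro ⟨p, hp, hpr, hp1⟩
  exact hr (by simpa using isIntegral_div_sq_of_cycle_on_circle hV hp hpr hp1)

end Plane

theorem not_isIntegral_inv_sq_sqrt {n : ℕ} (hn : 2 ≤ n) :
    ¬ IsIntegral ℤ (√(((n : ℝ) + 1) / (2 * n)) ^ 2)⁻¹ := by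
  rw [Real.sq_sqrt (by positivity), inv_div]
  intro h
  obtain ⟨k, hk⟩ := h.exists_int_iff_exists_rat.1 ⟨2 * n / (n + 1), by push_cast; rfl⟩
  have hn' : (2 : ℝ) ≤ n := by exact_mod_cast hn
  have one_lt : (1 : ℝ) < k := by
    rw [← hk, one_lt_div (by positivity)]
    linarith
  have lt_two : (k : ℝ) < 2 := by
    rw [← hk, div_lt_iff₀ (by positivity)]
    linarith
  norm_cast at one_lt lt_two
  omega

theorem no_unit_cycle_on_circle (n : ℕ) (hn : 2 ≤ n)
    (c : EuclideanSpace ℝ (Fin 2)) (m : ℕ) (hm : 3 ≤ m) :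
    ¬ ∃ p : ZMod m → EuclideanSpace ℝ (Fin 2),
        Function.Injective p ∧
        (∀ i, dist (p i) c = Real.sqrt (((n : ℝ) + 1) / (2 * n))) ∧
        (∀ i : ZMod m, dist (p i) (p (i + 1)) = 1) := by
  have : NeZero m := ⟨by omega⟩
  exact fun ⟨p, hp, hr, hd⟩ ↦ no_unit_cycle_on_circle_general finrank_euclideanSpace_fin
    (not_isIntegral_inv_sq_sqrt hn) ⟨p, fun i ↦ hp.ne (sub_one_ne_add_one_of_three_le hm i), hr, hd⟩
end
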